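/- arXiv:2001.09718 — 3 statements merged into one kernel-verified Lean document; each statement's English description precedes it below -/
import Mathlib

section
/- Let b ≥ 2 and n be natural numbers. The set {i ∈ ℕ : i is digit-wise dominated by n in base b} is finite, and its cardinality equals the product ∏_{d ∈ digits_b(n)} (d + 1), taken over the base-b digits d of n. -/
/-- Digit-wise domination splits into the last digit and the remaining digits. -/
theorem digitwise_le_iff_mod_and_div (b i n : ℕ) :
    (∀ s : ℕ, (i / b ^ s) % b ≤ (n / b ^ s) % b) ↔
      i % b ≤ n % b ∧ ∀ s : ℕ, (i / b / b ^ s) % b ≤ (n / b / b ^ s) % b := by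
  simp only [Nat.div_div_eq_div_mul, ← pow_succ']
  refine ⟨fun h => ⟨by simpa using h 0, fun s => h (s + 1)⟩, fun h s => ?_⟩
  cases s with
  | zero => simpa using h.1
  | succ s => exact h.2 s

/-- Only `0` is digit-wise dominated by `0`. -/
theorem eq_zero_of_digitwise_le_zero {b : ℕ} (hb : 2 ≤ b) (i : ℕ)
    (h : ∀ s : ℕ, (i / b ^ s) % b ≤ (0 / b ^ s) % b) : i = 0 := by
  induction i using Nat.strong_induction_on with
  | _ i ih =>
    by_contra hi
    rw [digitwise_le_iff_mod_and_div, Nat.zero_div] at h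
    have hdiv := ih (i / b) (Nat.div_lt_self (Nat.pos_of_ne_zero hi) hb) h.2
    have hmod : i % b = 0 := by simpa using h.1
    have := Nat.mod_add_div i b
    rw [hdiv, hmod] at this
    exact hi (by simpa using this.symm)

/-- The numbers digit-wise dominated by `n` arise from those dominated by `n / b` by appending
a last digit that is at most `n % b`. -/
theorem setOf_digitwise_le_eq_image {b : ℕ} (hb : 2 ≤ b) (n : ℕ) :
    {i : ℕ | ∀ s : ℕ, (i / b ^ s) % b ≤ (n / b ^ s) % b} =
      (fun p : ℕ × ℕ => p.1 + b * p.2) ''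
        (Set.Iic (n % b) ×ˢ {i : ℕ | ∀ s : ℕ, (i / b ^ s) % b ≤ (n / b / b ^ s) % b}) := by
  have hb0 : 0 < b := by omega
  ext i
  rw [Set.mem_ofPred_eq, digitwise_le_iff_mod_and_div]
  constructor
  · exact fun h => ⟨(i % b, i / b), h, Nat.mod_add_div i b⟩
  · rintro ⟨⟨d, j⟩, ⟨hd, hj⟩, rfl⟩
    have hdb : d < b := lt_of_le_of_lt hd (Nat.mod_lt n hb0)
    simpa [Nat.add_mul_div_left _ _ hb0, Nat.mod_eq_of_lt hdb, Nat.div_eq_of_lt hdb]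
      using And.intro hd hj

/-- Appending a last digit is injective. -/
theorem injOn_add_mul_of_lt {b m : ℕ} (hm : m < b) (S : Set ℕ) :
    Set.InjOn (fun p : ℕ × ℕ => p.1 + b * p.2) (Set.Iic m ×ˢ S) := by
  rintro ⟨d, j⟩ ⟨hd, -⟩ ⟨e, k⟩ ⟨he, -⟩ h
  have hdb : d < b := lt_of_le_of_lt hd hm
  have heb : e < b := lt_of_le_of_lt he hm
  have hb0 : 0 < b := by omega
  have hmod := congrArg (· % b) h
  have hdiv := congrArg (· / b) h
  simp only [Nat.add_mul_mod_self_left, Nat.mod_eq_of_lt hdb, Nat.mod_eq_of_lt heb] at hmod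
  simp only [Nat.add_mul_div_left _ _ hb0, Nat.div_eq_of_lt hdb, Nat.div_eq_of_lt heb,
    zero_add] at hdiv
  rw [hmod, hdiv]

theorem stmt_11 (b n : ℕ) (hb : 2 ≤ b) :
    {i : ℕ | ∀ s : ℕ, (i / b ^ s) % b ≤ (n / b ^ s) % b}.Finite ∧
      Nat.card {i : ℕ | ∀ s : ℕ, (i / b ^ s) % b ≤ (n / b ^ s) % b} =
        ((Nat.digits b n).map (· + 1)).prod := by
  induction n using Nat.strong_induction_on with
  | _ n ih =>
    rcases Nat.eq_zero_or_pos n with rfl | hn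
    · have h0 : {i : ℕ | ∀ s : ℕ, (i / b ^ s) % b ≤ (0 / b ^ s) % b} = {0} := by
        ext i
        exact ⟨eq_zero_of_digitwise_le_zero hb i, by rintro rfl s; exact le_rfl⟩
      rw [h0]
      simp
    · obtain ⟨hfin, hcard⟩ := ih (n / b) (Nat.div_lt_self hn hb)
      rw [setOf_digitwise_le_eq_image hb n]
      refine ⟨((Set.finite_Iic _).prod hfin).image _, ?_⟩
      rw [Nat.card_image_of_injOn (injOn_add_mul_of_lt (Nat.mod_lt n (by omega)) _),
        Nat.digits_def' hb hn, List.map_cons, List.prod_cons, ← hcard,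
        Nat.card_congr (Equiv.Set.prod _ _), Nat.card_prod]
      simp
end

section
/- Let b ≥ 2 and n ≥ 1 be natural numbers. Then the number of i with 0 < i < n that are digit-wise dominated by n in base b is at least (Σ of the base-b digits of n) − 2. -/
/-- Digit-wise domination in base `b` is preserved when dominated last digits are appended. -/
theorem digitwise_le_mul_add {b i j m r : ℕ} (hj : j < b) (hr : r < b) (hjr : j ≤ r)
    (him : ∀ s : ℕ, (i / b ^ s) % b ≤ (m / b ^ s) % b) (s : ℕ) :
    ((b * i + j) / b ^ s) % b ≤ ((b * m + r) / b ^ s) % b := by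
  have hb : 0 < b := by omega
  cases s with
  | zero => simpa [Nat.mul_add_mod, Nat.mod_eq_of_lt hj, Nat.mod_eq_of_lt hr] using hjr
  | succ s =>
    rw [pow_succ', ← Nat.div_div_eq_div_mul, ← Nat.div_div_eq_div_mul,
      Nat.mul_add_div hb, Nat.mul_add_div hb, Nat.div_eq_of_lt hj, Nat.div_eq_of_lt hr]
    exact him s

/-- There are more numbers digit-wise dominated by `n` than the digit sum of `n`. -/
theorem exists_finset_digitwise_le {b : ℕ} (hb : 2 ≤ b) (n : ℕ) :
    ∃ S : Finset ℕ, (Nat.digits b n).sum + 1 ≤ S.card ∧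
      ∀ i ∈ S, i ≤ n ∧ ∀ s : ℕ, (i / b ^ s) % b ≤ (n / b ^ s) % b := by
  induction n using Nat.strong_induction_on with
  | _ n ih =>
    rcases Nat.eq_zero_or_pos n with rfl | hn
    · exact ⟨{0}, by simp, by simp⟩
    obtain ⟨S, hcard, hS⟩ := ih (n / b) (Nat.div_lt_self hn hb)
    have hb0 : 0 < b := by omega
    have hr : n % b < b := Nat.mod_lt n hb0
    have hdecomp : b * (n / b) + n % b = n := Nat.div_add_mod n b
    have hdisj : Disjoint (S.image (b * ·)) (Finset.Ioc (b * (n / b)) n) := by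
      rw [Finset.disjoint_left]
      intro x hx hx'
      obtain ⟨i, hi, rfl⟩ := Finset.mem_image.mp hx
      exact absurd (Nat.mul_le_mul_left b (hS i hi).1) (not_le.mpr (Finset.mem_Ioc.mp hx').1)
    refine ⟨S.image (b * ·) ∪ Finset.Ioc (b * (n / b)) n, ?_, ?_⟩
    · rw [Finset.card_union_of_disjoint hdisj,
        Finset.card_image_of_injective _ (mul_right_injective₀ hb0.ne'), Nat.card_Ioc,
        Nat.digits_def' hb hn, List.sum_cons]
      omega
    · intro x hx
      rcases Finset.mem_union.mp hx with hx | hx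
      · obtain ⟨i, hi, rfl⟩ := Finset.mem_image.mp hx
        refine ⟨(Nat.mul_le_mul_left b (hS i hi).1).trans (Nat.mul_div_le n b), ?_⟩
        have h := digitwise_le_mul_add hb0 hr (Nat.zero_le _) (hS i hi).2
        rwa [hdecomp] at h
      · obtain ⟨hlow, hle⟩ := Finset.mem_Ioc.mp hx
        obtain ⟨j, rfl⟩ := Nat.exists_eq_add_of_lt hlow
        refine ⟨hle, ?_⟩
        have h := digitwise_le_mul_add (i := n / b) (m := n / b) (j := j + 1)
          (by omega) hr (by omega) fun _ => le_rfl
        rwa [hdecomp] at h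

theorem stmt_12 (b n : ℕ) (hb : 2 ≤ b) (hn : 1 ≤ n) :
    (Nat.digits b n).sum - 2 ≤
      Nat.card {i : ℕ | 0 < i ∧ i < n ∧ ∀ s : ℕ, (i / b ^ s) % b ≤ (n / b ^ s) % b} := by
  obtain ⟨S, hcard, hS⟩ := exists_finset_digitwise_le hb n
  have hsub : (((S.erase 0).erase n : Finset ℕ) : Set ℕ) ⊆
      {i : ℕ | 0 < i ∧ i < n ∧ ∀ s : ℕ, (i / b ^ s) % b ≤ (n / b ^ s) % b} := by
    intro i hi
    simp only [Finset.mem_coe, Finset.mem_erase] at hi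
    obtain ⟨hin, hi0, hiS⟩ := hi
    exact ⟨Nat.pos_of_ne_zero hi0, lt_of_le_of_ne (hS i hiS).1 hin, (hS i hiS).2⟩
  have hfin : {i : ℕ | 0 < i ∧ i < n ∧
      ∀ s : ℕ, (i / b ^ s) % b ≤ (n / b ^ s) % b}.Finite :=
    (Set.finite_Iio n).subset fun _ hi => hi.2.1
  have hle := Set.ncard_le_ncard hsub hfin
  rw [Set.ncard_coe_finset] at hle
  have herase_zero := Finset.pred_card_le_card_erase (s := S) (a := 0)
  have herase_n := Finset.pred_card_le_card_erase (s := S.erase 0) (a := n)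
  rw [Nat.card_coe_set_eq]
  omega
end

section
/- Let b ≥ 2 and n, i be natural numbers such that i is digit-wise dominated by n in base b. Then for every s ∈ ℕ, the s-th base-b digit of n − i equals the s-th base-b digit of n minus the s-th base-b digit of i; in particular, n − i is also digit-wise dominated by n in base b. -/
/-- Digit-wise domination passes to the numbers with their last digit removed. -/
theorem digit_le_div_base {b n i : ℕ}
    (hdom : ∀ s : ℕ, (i / b ^ s) % b ≤ (n / b ^ s) % b) (s : ℕ) :
    (i / b / b ^ s) % b ≤ (n / b / b ^ s) % b := by
  simpa only [Nat.div_div_eq_div_mul, ← pow_succ'] using hdom (s + 1)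

theorem le_of_forall_digit_le {b : ℕ} (hb : 2 ≤ b) {n i : ℕ}
    (hdom : ∀ s : ℕ, (i / b ^ s) % b ≤ (n / b ^ s) % b) : i ≤ n := by
  induction i using Nat.strong_induction_on generalizing n with
  | _ i ih =>
    rcases Nat.eq_zero_or_pos i with rfl | hi
    · exact Nat.zero_le n
    · have hdiv : i / b ≤ n / b :=
        ih (i / b) (Nat.div_lt_self hi hb) (digit_le_div_base hdom)
      have hmod : i % b ≤ n % b := by simpa using hdom 0
      rw [← Nat.div_add_mod i b, ← Nat.div_add_mod n b]
      gcongr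

theorem sub_eq_mul_div_sub_add_mod_sub {b n i : ℕ}
    (hdiv : i / b ≤ n / b) (hmod : i % b ≤ n % b) :
    n - i = b * (n / b - i / b) + (n % b - i % b) := by
  have hmul : b * (i / b) ≤ b * (n / b) := Nat.mul_le_mul_left b hdiv
  have hn := Nat.div_add_mod n b
  have hi := Nat.div_add_mod i b
  rw [Nat.mul_sub]
  omega

theorem digit_sub_of_forall_digit_le {b : ℕ} (hb : 2 ≤ b) {n i : ℕ}
    (hdom : ∀ s : ℕ, (i / b ^ s) % b ≤ (n / b ^ s) % b) (s : ℕ) :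
    ((n - i) / b ^ s) % b = (n / b ^ s) % b - (i / b ^ s) % b := by
  have hpos : 0 < b := by omega
  induction s generalizing n i with
  | zero =>
    have hmod : i % b ≤ n % b := by simpa using hdom 0
    have hdiv := le_of_forall_digit_le hb (digit_le_div_base hdom)
    have hlt : n % b - i % b < b := (Nat.sub_le _ _).trans_lt (Nat.mod_lt n hpos)
    simp only [pow_zero, Nat.div_one]
    rw [sub_eq_mul_div_sub_add_mod_sub hdiv hmod, Nat.mul_add_mod, Nat.mod_eq_of_lt hlt]
  | succ s ih =>
    have hmod : i % b ≤ n % b := by simpa using hdom 0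
    have hdiv := le_of_forall_digit_le hb (digit_le_div_base hdom)
    have hlt : n % b - i % b < b := (Nat.sub_le _ _).trans_lt (Nat.mod_lt n hpos)
    have hsub : (n - i) / b = n / b - i / b := by
      rw [sub_eq_mul_div_sub_add_mod_sub hdiv hmod, Nat.mul_add_div hpos,
        Nat.div_eq_of_lt hlt, Nat.add_zero]
    simp only [pow_succ', ← Nat.div_div_eq_div_mul, hsub]
    exact ih (digit_le_div_base hdom)

theorem stmt_13 (b n i : ℕ) (hb : 2 ≤ b)
    (hdom : ∀ s : ℕ, (i / b ^ s) % b ≤ (n / b ^ s) % b) :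
    (∀ s : ℕ, ((n - i) / b ^ s) % b = (n / b ^ s) % b - (i / b ^ s) % b) ∧
      ∀ s : ℕ, ((n - i) / b ^ s) % b ≤ (n / b ^ s) % b :=
  ⟨digit_sub_of_forall_digit_le hb hdom, fun s =>
    (digit_sub_of_forall_digit_le hb hdom s).trans_le (Nat.sub_le _ _)⟩
end
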